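/- There exists an absolute constant C (one may take C = 4600) such that for every integer D ≥ 1 and every polynomial U(z) = Σ_{n=1}^{D} a_n z^n with a_n ∈ ℂ (so that U(0) = 0), one has ‖U‖_F ≤ C · ‖ρ ∘ U‖_F. -/

import Mathlib

open MeasureTheory

/-- The Fock norm of a function `F : ℂ → E`:
`‖F‖_F² = (1/π) ∫_ℂ ‖F(z)‖² e^{-|z|²} dm(z)`. -/
noncomputable def fockNorm {E : Type*} [NormedAddCommGroup E] (F : ℂ → E) : ℝ :=
  Real.sqrt ((1 / Real.pi) * ∫ z : ℂ, ‖F z‖ ^ 2 * Real.exp (-‖z‖ ^ 2))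

/-- The defect function `ρ(w) = ||1+w| − 1|`. -/
noncomputable def ρ (w : ℂ) : ℝ := |‖1 + w‖ - 1|

/-!
Let `γ = π⁻¹ e^{-|z|²} dm(z)` and let `f` be an entire function with `f 0 = 0` and Fock norm
`N = ‖f‖_{L²(γ)}`. By the mean value property, `f` and `f ^ 2` have integral zero against every
rotation-invariant finite measure. Two pointwise lower bounds for `ρ` exploit this: a bound of
`ρ(u)²` below by `|u|² / 9` plus a multiple of `Re (u²)`, valid for `|u| ≤ 1/2`, and a bound by
`|u|² / 9` plus a multiple of `Re u` minus the constant `1/72`, valid everywhere. Since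
`|f z|² e^{-|z|²} ≤ N²`, the first applies on the disc `e^{-|z|²} ≥ 4 N²`. The second is used
outside this disc, where its constant costs little: that region has `γ`-measure at most `4 N²`.
Hence `‖ρ ∘ f‖² ≥ N² / 9 - 4 N² / 72 = N² / 18`.
-/

open Set
open scoped Real ENNReal ComplexConjugate

section RotationInvariance

/-- Invariance of a measure on `ℂ` under all rotations about the origin; this is the property that
makes the mean value property of entire functions available for integrals against the measure. -/
def IsRotationInvariant (μ : Measure ℂ) : Prop :=
  ∀ c : Circle, MeasurePreserving (rotation c) μ μ

variable {μ : Measure ℂ}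

lemma isRotationInvariant_volume : IsRotationInvariant volume :=
  fun c => (rotation c).measurePreserving

lemma IsRotationInvariant.restrict_norm_preimage (hμ : IsRotationInvariant μ) {T : Set ℝ}
    (hT : MeasurableSet T) : IsRotationInvariant (μ.restrict (norm ⁻¹' T)) := fun c => by
  have hpre : rotation c ⁻¹' (norm ⁻¹' T) = norm ⁻¹' T := by
    ext z
    simp only [mem_preimage, LinearIsometryEquiv.norm_map]
  simpa only [hpre] using (hμ c).restrict_preimage (measurable_norm hT)

lemma IsRotationInvariant.withDensity_norm (hμ : IsRotationInvariant μ) {g : ℝ → ℝ≥0∞}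
    (hg : Measurable g) : IsRotationInvariant (μ.withDensity fun z => g ‖z‖) := fun c => by
  refine ⟨(hμ c).measurable, Measure.ext fun s hs => ?_⟩
  rw [Measure.map_apply (hμ c).measurable hs, withDensity_apply _ ((hμ c).measurable hs),
    withDensity_apply _ hs,
    ← (hμ c).setLIntegral_comp_preimage (f := fun z => g ‖z‖) hs (by fun_prop)]
  simp only [LinearIsometryEquiv.norm_map]

lemma IsRotationInvariant.integrable_rotation_exp_prod {E : Type*} [NormedAddCommGroup E]
    [SFinite μ] (hμ : IsRotationInvariant μ) {f : ℂ → E} (hf : Integrable f μ) (ν : Measure ℝ)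
    [IsFiniteMeasure ν] :
    Integrable (fun p : ℝ × ℂ => f (rotation (Circle.exp p.1) p.2)) (ν.prod μ) := by
  have hskew : MeasurePreserving (fun p : ℝ × ℂ => (p.1, rotation (Circle.exp p.1) p.2))
      (ν.prod μ) (ν.prod μ) :=
    (MeasurePreserving.id ν).skew_product (g := fun θ z => rotation (Circle.exp θ) z)
      (by simp only [Function.uncurry_def, rotation_apply]; fun_prop)
      (ae_of_all _ fun θ => (hμ (Circle.exp θ)).map_eq)
  exact hskew.integrable_comp_of_integrable (hf.comp_snd ν)

lemma IsRotationInvariant.integral_eq_smul_apply_zero {E : Type*} [NormedAddCommGroup E]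
    [NormedSpace ℂ E] [CompleteSpace E] [SFinite μ] (hμ : IsRotationInvariant μ) {f : ℂ → E}
    (hf : Differentiable ℂ f) (hfi : Integrable f μ) :
    ∫ z, f z ∂μ = μ.real univ • f 0 := by
  have hmean (z : ℂ) : (2 * π)⁻¹ • ∫ θ in 0..2 * π, f (rotation (Circle.exp θ) z) = f 0 := by
    have hg : Differentiable ℂ fun w => f (w * z) := by fun_prop
    simpa [Real.circleAverage_def, circleMap] using
      (hg.diffContOnCl (s := Metric.ball 0 |1|)).circleAverage
  have hrot (θ : ℝ) : ∫ z, f (rotation (Circle.exp θ) z) ∂μ = ∫ z, f z ∂μ :=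
    (hμ (Circle.exp θ)).integral_comp (rotation _).toHomeomorph.measurableEmbedding f
  have : IsFiniteMeasure (volume.restrict (uIoc 0 (2 * π))) :=
    inferInstanceAs (IsFiniteMeasure (volume.restrict (Ioc _ _)))
  calc ∫ z, f z ∂μ = (2 * π)⁻¹ • ∫ _θ in 0..2 * π, ∫ z, f z ∂μ := by
        rw [intervalIntegral.integral_const, sub_zero, inv_smul_smul₀ (by positivity)]
    _ = (2 * π)⁻¹ • ∫ θ in 0..2 * π, ∫ z, f (rotation (Circle.exp θ) z) ∂μ := by
        simp only [hrot]
    _ = (2 * π)⁻¹ • ∫ z, (∫ θ in 0..2 * π, f (rotation (Circle.exp θ) z)) ∂μ := by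
        rw [intervalIntegral_integral_swap (hμ.integrable_rotation_exp_prod hfi _)]
    _ = ∫ _z, f 0 ∂μ := by rw [← integral_smul]; simp only [hmean]
    _ = μ.real univ • f 0 := integral_const _

end RotationInvariance

section FockMeasure

variable {E : Type*} [NormedAddCommGroup E]

/-- The Gaussian probability measure `π⁻¹ e^{-|z|²} dm(z)` on `ℂ`: the Fock norm is the `L²` norm
with respect to it. -/
noncomputable def fockMeasure : Measure ℂ :=
  volume.withDensity fun z => ENNReal.ofReal (π⁻¹ * Real.exp (-‖z‖ ^ 2))

lemma isRotationInvariant_fockMeasure : IsRotationInvariant fockMeasure :=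
  isRotationInvariant_volume.withDensity_norm
    (g := fun r => ENNReal.ofReal (π⁻¹ * Real.exp (-r ^ 2))) (by fun_prop)

lemma integral_fockMeasure [NormedSpace ℝ E] (g : ℂ → E) :
    ∫ z, g z ∂fockMeasure = ∫ z, (π⁻¹ * Real.exp (-‖z‖ ^ 2)) • g z := by
  rw [fockMeasure, integral_withDensity_eq_integral_toReal_smul (by fun_prop)
    (ae_of_all _ fun _ => ENNReal.ofReal_lt_top)]
  congr! with _
  exact ENNReal.toReal_ofReal (by positivity)

lemma integrable_fockMeasure_iff [NormedSpace ℝ E] {g : ℂ → E} :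
    Integrable g fockMeasure ↔ Integrable fun z => (π⁻¹ * Real.exp (-‖z‖ ^ 2)) • g z := by
  rw [fockMeasure, integrable_withDensity_iff_integrable_smul' (by fun_prop)
    (ae_of_all _ fun _ => ENNReal.ofReal_lt_top)]
  congr! with _
  exact ENNReal.toReal_ofReal (by positivity)

lemma memLp_two_fockMeasure_iff {f : ℂ → E} (hf : AEStronglyMeasurable f fockMeasure) :
    MemLp f 2 fockMeasure ↔ Integrable fun z => ‖f z‖ ^ 2 * Real.exp (-‖z‖ ^ 2) := by
  rw [memLp_two_iff_integrable_sq_norm hf, integrable_fockMeasure_iff,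
    ← integrable_const_mul_iff (inv_ne_zero Real.pi_ne_zero).isUnit
      fun z => ‖f z‖ ^ 2 * Real.exp (-‖z‖ ^ 2)]
  congr! 2 with _
  rw [smul_eq_mul]
  ring

lemma fockNorm_sq (F : ℂ → E) :
    fockNorm F ^ 2 = ∫ z, ‖F z‖ ^ 2 ∂fockMeasure := by
  rw [fockNorm, Real.sq_sqrt (by positivity), integral_fockMeasure, ← integral_const_mul]
  congr! 2 with _
  rw [smul_eq_mul, one_div]
  ring

lemma integral_comp_norm_sq_fockMeasure [NormedSpace ℝ E] (g : ℝ → E) :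
    ∫ z, g (‖z‖ ^ 2) ∂fockMeasure = ∫ t in Ioi 0, Real.exp (-t) • g t := by
  have hball : volume.real (Metric.ball (0 : ℂ) 1) = π := by
    simp [Measure.real, Complex.volume_ball]
  have hexp (r : ℝ) : 2 * (π * (r * (π⁻¹ * Real.exp (-r ^ 2)))) = 2 * r * Real.exp (-r ^ 2) := by
    field_simp
  calc ∫ z, g (‖z‖ ^ 2) ∂fockMeasure
      = 2 • π • ∫ r in Ioi 0, r • (π⁻¹ * Real.exp (-r ^ 2)) • g (r ^ 2) := by
        rw [integral_fockMeasure,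
          integral_fun_norm_addHaar volume fun r => (π⁻¹ * Real.exp (-r ^ 2)) • g (r ^ 2), hball]
        simp only [Complex.finrank_real_complex, Nat.add_one_sub_one, pow_one]
    _ = ∫ r in Ioi 0, (2 * r) • Real.exp (-r ^ 2) • g (r ^ 2) := by
        rw [← Nat.cast_smul_eq_nsmul ℝ, ← integral_smul, ← integral_smul]
        simp only [smul_smul, Nat.cast_ofNat, hexp]
    _ = ∫ t in Ioi 0, Real.exp (-t) • g t := by
        rw [← integral_comp_rpow_Ioi_of_pos (g := fun t => Real.exp (-t) • g t) two_pos]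
        norm_num

instance : IsProbabilityMeasure fockMeasure := by
  have h := integral_comp_norm_sq_fockMeasure fun _ => (1 : ℝ)
  simp only [integral_const, smul_eq_mul, mul_one, integral_exp_neg_Ioi_zero] at h
  exact ⟨(ENNReal.toReal_eq_one_iff _).1 h⟩

lemma fockMeasure_real_exp_neg_norm_sq_lt {b : ℝ} (hb : 0 < b) (hb1 : b ≤ 1) :
    fockMeasure.real {z | Real.exp (-‖z‖ ^ 2) < b} = b := by
  have hT : MeasurableSet {t : ℝ | Real.exp (-t) < b} :=
    measurableSet_lt (by fun_prop) measurable_const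
  have hsub : Ioi 0 ∩ {t | Real.exp (-t) < b} = Ioi (-Real.log b) := by
    ext t
    simp only [mem_inter_iff, mem_Ioi, mem_ofPred_eq, ← Real.lt_log_iff_exp_lt hb, neg_lt]
    exact and_iff_right_of_imp fun h => neg_lt_zero.1 (h.trans_le (Real.log_nonpos hb.le hb1))
  rw [← integral_indicator_one (measurableSet_lt (by fun_prop) measurable_const)]
  calc ∫ z, {z : ℂ | Real.exp (-‖z‖ ^ 2) < b}.indicator 1 z ∂fockMeasure
      = ∫ t in Ioi 0, Real.exp (-t) • {t | Real.exp (-t) < b}.indicator (1 : ℝ → ℝ) t :=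
        integral_comp_norm_sq_fockMeasure ({t | Real.exp (-t) < b}.indicator 1)
    _ = ∫ t in Ioi 0, {t | Real.exp (-t) < b}.indicator (fun t => Real.exp (-t)) t := by
        simp [indicator_apply]
    _ = ∫ t in Ioi (-Real.log b), Real.exp (-t) := by
        rw [setIntegral_indicator hT, hsub]
    _ = b := by rw [integral_exp_neg_Ioi, neg_neg, Real.exp_log hb]

lemma fockMeasure_real_exp_neg_norm_sq_lt_le {b : ℝ} (hb : 0 ≤ b) :
    fockMeasure.real {z | Real.exp (-‖z‖ ^ 2) < b} ≤ b := by
  rcases hb.eq_or_lt with rfl | hb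
  · simp [(Real.exp_pos _).not_gt]
  rcases le_total 1 b with h1 | h1
  · exact measureReal_le_one.trans h1
  · exact (fockMeasure_real_exp_neg_norm_sq_lt hb h1).le

lemma memLp_pow_fockMeasure (n : ℕ) : MemLp (fun z : ℂ => z ^ n) 2 fockMeasure := by
  rw [memLp_two_iff_integrable_sq_norm (by fun_prop)]
  refine Integrable.of_integral_ne_zero ?_
  have hmoment : ∫ z : ℂ, ‖z ^ n‖ ^ 2 ∂fockMeasure = n.factorial := by
    calc ∫ z : ℂ, ‖z ^ n‖ ^ 2 ∂fockMeasure = ∫ z : ℂ, (‖z‖ ^ 2) ^ n ∂fockMeasure := by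
          simp only [norm_pow, pow_right_comm]
      _ = ∫ t in Ioi 0, Real.exp (-t) • t ^ n := integral_comp_norm_sq_fockMeasure _
      _ = Real.Gamma (n + 1) := by
          rw [Real.Gamma_eq_integral (by positivity)]; simp
      _ = n.factorial := Real.Gamma_nat_eq_factorial n
  rw [hmoment]
  positivity

end FockMeasure

section PointEvaluation

variable {E : Type*} [NormedAddCommGroup E]

lemma exp_neg_norm_sq_mul_exp (z w : ℂ) :
    Real.exp (-‖w‖ ^ 2) * Real.exp (-(2 * (conj z * w).re + ‖z‖ ^ 2))
      = Real.exp (-‖z + w‖ ^ 2) := by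
  rw [← Real.exp_add, norm_add_sq_real, Complex.inner, mul_comm w]
  congr 1
  ring

lemma norm_integral_sq_le {α : Type*} [MeasurableSpace α] {μ : Measure α} [IsProbabilityMeasure μ]
    [NormedSpace ℝ E] {f : α → E} (hf : MemLp f 2 μ) :
    ‖∫ x, f x ∂μ‖ ^ 2 ≤ ∫ x, ‖f x‖ ^ 2 ∂μ := by
  have hvar := ProbabilityTheory.variance_nonneg (fun x => ‖f x‖) μ
  rw [ProbabilityTheory.variance_eq_sub hf.norm, sub_nonneg] at hvar
  exact (pow_le_pow_left₀ (norm_nonneg _) (norm_integral_le_integral_norm f) 2).trans hvar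

variable [NormedSpace ℂ E]

/-- The Weyl translation of `f` by `z`: the shift `w ↦ f (z + w)` multiplied by the entire factor
which makes the operation isometric for the Fock norm. -/
noncomputable def weylTranslate (z : ℂ) (f : ℂ → E) (w : ℂ) : E :=
  Complex.exp (-(conj z * w + ‖z‖ ^ 2 / 2)) • f (z + w)

lemma norm_weylTranslate_sq_mul_exp (z : ℂ) (f : ℂ → E) (w : ℂ) :
    ‖weylTranslate z f w‖ ^ 2 * Real.exp (-‖w‖ ^ 2)
      = ‖f (z + w)‖ ^ 2 * Real.exp (-‖z + w‖ ^ 2) := by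
  have hexp : ‖Complex.exp (-(conj z * w + ‖z‖ ^ 2 / 2))‖ ^ 2
      = Real.exp (-(2 * (conj z * w).re + ‖z‖ ^ 2)) := by
    have hre : ((‖z‖ : ℂ) ^ 2 / 2).re = ‖z‖ ^ 2 / 2 := by norm_cast
    rw [Complex.norm_exp, ← Real.exp_nat_mul, Complex.neg_re, Complex.add_re, hre]
    congr 1
    push_cast
    ring
  rw [weylTranslate, norm_smul, mul_pow, hexp, ← exp_neg_norm_sq_mul_exp]
  ring

lemma fockNorm_weylTranslate (z : ℂ) (f : ℂ → E) : fockNorm (weylTranslate z f) = fockNorm f := by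
  simp only [fockNorm, norm_weylTranslate_sq_mul_exp]
  rw [integral_add_left_eq_self (fun w => ‖f w‖ ^ 2 * Real.exp (-‖w‖ ^ 2))]

lemma memLp_weylTranslate {f : ℂ → E} (hf : Continuous f) (hfi : MemLp f 2 fockMeasure) (z : ℂ) :
    MemLp (weylTranslate z f) 2 fockMeasure := by
  have hcont : Continuous (weylTranslate z f) := by unfold weylTranslate; fun_prop
  rw [memLp_two_fockMeasure_iff hcont.aestronglyMeasurable]
  simp only [norm_weylTranslate_sq_mul_exp]
  exact ((memLp_two_fockMeasure_iff hfi.aestronglyMeasurable).1 hfi).comp_add_left z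

variable [CompleteSpace E] {f : ℂ → E}

lemma norm_apply_zero_sq_le_fockNorm_sq (hf : Differentiable ℂ f) (hfi : MemLp f 2 fockMeasure) :
    ‖f 0‖ ^ 2 ≤ fockNorm f ^ 2 := by
  have hmean : ∫ z, f z ∂fockMeasure = f 0 := by
    rw [isRotationInvariant_fockMeasure.integral_eq_smul_apply_zero hf
      (hfi.integrable one_le_two), probReal_univ, one_smul]
  rw [fockNorm_sq, ← hmean]
  exact norm_integral_sq_le hfi

lemma norm_sq_mul_exp_le_fockNorm_sq (hf : Differentiable ℂ f)
    (hfi : MemLp f 2 fockMeasure) (z : ℂ) :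
    ‖f z‖ ^ 2 * Real.exp (-‖z‖ ^ 2) ≤ fockNorm f ^ 2 := by
  have hdiff : Differentiable ℂ (weylTranslate z f) := by unfold weylTranslate; fun_prop
  calc ‖f z‖ ^ 2 * Real.exp (-‖z‖ ^ 2) = ‖weylTranslate z f 0‖ ^ 2 := by
        simpa using (norm_weylTranslate_sq_mul_exp z f 0).symm
    _ ≤ fockNorm (weylTranslate z f) ^ 2 :=
        norm_apply_zero_sq_le_fockNorm_sq hdiff (memLp_weylTranslate hf.continuous hfi z)
    _ = fockNorm f ^ 2 := by rw [fockNorm_weylTranslate]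

end PointEvaluation

section Defect

lemma continuous_ρ : Continuous ρ := by
  unfold ρ
  fun_prop

lemma norm_ρ_le (u : ℂ) : ‖ρ u‖ ≤ ‖u‖ := by
  simpa [ρ] using abs_norm_sub_norm_le (1 + u) 1

lemma memLp_ρ_comp {μ : Measure ℂ} {p : ℝ≥0∞} {f : ℂ → ℂ} (hf : MemLp f p μ) :
    MemLp (fun z => ρ (f z)) p μ :=
  hf.mono (continuous_ρ.comp_aestronglyMeasurable hf.aestronglyMeasurable)
    (ae_of_all _ fun z => norm_ρ_le (f z))

lemma norm_one_add_sq (u : ℂ) : ‖1 + u‖ ^ 2 = 1 + 2 * u.re + ‖u‖ ^ 2 := by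
  rw [norm_add_sq_real, Complex.inner, norm_one, one_pow, map_one, mul_one]

lemma le_ρ_sq (u : ℂ) : (1 / 9) * ‖u‖ ^ 2 + (2 / 9) * u.re - 1 / 72 ≤ ρ u ^ 2 := by
  rw [ρ, sq_abs]
  -- AM-GM in the form `2 t ≤ (8 / 9) t² + 9 / 8` with `t = ‖1 + u‖`.
  linarith [norm_one_add_sq u, sq_nonneg (‖1 + u‖ - 9 / 8)]

lemma le_ρ_sq_of_norm_le {u : ℂ} (hu : ‖u‖ ≤ 1 / 2) :
    (1 / 9) * ‖u‖ ^ 2 + (4 / 25) * (u ^ 2).re ≤ ρ u ^ 2 := by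
  have hre : (u ^ 2).re = 2 * u.re ^ 2 - ‖u‖ ^ 2 := by
    rw [← Complex.normSq_eq_norm_sq, Complex.normSq_apply, pow_two, Complex.mul_re]
    ring
  have hadd : ‖1 + u‖ + 1 ≤ 5 / 2 := by linarith [norm_add_le 1 u, norm_one (α := ℂ)]
  have hsq : ‖u‖ ^ 2 ≤ 1 / 4 := by nlinarith [norm_nonneg u]
  have hρ : ρ u * (‖1 + u‖ + 1) = |2 * u.re + ‖u‖ ^ 2| := by
    rw [ρ, ← abs_of_nonneg (by positivity : 0 ≤ ‖1 + u‖ + 1), ← abs_mul]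
    congr 1
    linarith [norm_one_add_sq u]
  have hlower : (2 * u.re + ‖u‖ ^ 2) ^ 2 ≤ 25 / 4 * ρ u ^ 2 := by
    rw [← sq_abs, ← hρ, mul_pow, mul_comm]
    gcongr
    calc (‖1 + u‖ + 1) ^ 2 ≤ (5 / 2) ^ 2 := by gcongr
      _ = 25 / 4 := by norm_num
  have hsquare : 2 * u.re ^ 2 - (‖u‖ ^ 2) ^ 2 ≤ (2 * u.re + ‖u‖ ^ 2) ^ 2 := by
    linarith [sq_nonneg (u.re + ‖u‖ ^ 2)]
  rw [hre]
  nlinarith [sq_nonneg ‖u‖]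

end Defect

section Coercivity

variable {μ : Measure ℂ} [IsFiniteMeasure μ] {f : ℂ → ℂ}

lemma IsRotationInvariant.integral_re_eq_zero (hμ : IsRotationInvariant μ) (hf : Differentiable ℂ f)
    (hf0 : f 0 = 0) (hfi : Integrable f μ) : ∫ z, (f z).re ∂μ = 0 := by
  calc ∫ z, (f z).re ∂μ = (∫ z, f z ∂μ).re := integral_re hfi
    _ = 0 := by simp [hμ.integral_eq_smul_apply_zero hf hfi, hf0]

lemma IsRotationInvariant.integral_norm_sq_sub_le_integral_ρ_sq (hμ : IsRotationInvariant μ)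
    (hf : Differentiable ℂ f) (hf0 : f 0 = 0) (hfi : MemLp f 2 μ) :
    (1 / 9) * ∫ z, ‖f z‖ ^ 2 ∂μ - (1 / 72) * μ.real univ ≤ ∫ z, ‖ρ (f z)‖ ^ 2 ∂μ := by
  have hfi1 : Integrable f μ := hfi.integrable one_le_two
  have hfsq : Integrable (fun z => (1 / 9) * ‖f z‖ ^ 2) μ :=
    (hfi.integrable_norm_pow two_ne_zero).const_mul _
  have hre : Integrable (fun z => (2 / 9) * (f z).re) μ := hfi1.re.const_mul _
  have hsum : Integrable (fun z => (1 / 9) * ‖f z‖ ^ 2 + (2 / 9) * (f z).re) μ := hfsq.add hre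
  calc (1 / 9) * ∫ z, ‖f z‖ ^ 2 ∂μ - (1 / 72) * μ.real univ
      = ∫ z, ((1 / 9) * ‖f z‖ ^ 2 + (2 / 9) * (f z).re - 1 / 72) ∂μ := by
        rw [integral_sub hsum (integrable_const _), integral_add hfsq hre,
          integral_const_mul, integral_const_mul, hμ.integral_re_eq_zero hf hf0 hfi1,
          integral_const, smul_eq_mul]
        ring
    _ ≤ ∫ z, ‖ρ (f z)‖ ^ 2 ∂μ := by
        refine integral_mono (hsum.sub (integrable_const _))
          ((memLp_ρ_comp hfi).integrable_norm_pow two_ne_zero) fun z => ?_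
        simpa only [Real.norm_eq_abs, sq_abs] using le_ρ_sq (f z)

lemma IsRotationInvariant.integral_norm_sq_le_integral_ρ_sq (hμ : IsRotationInvariant μ)
    (hf : Differentiable ℂ f) (hf0 : f 0 = 0) (hfi : MemLp f 2 μ) (hle : ∀ᵐ z ∂μ, ‖f z‖ ≤ 1 / 2) :
    (1 / 9) * ∫ z, ‖f z‖ ^ 2 ∂μ ≤ ∫ z, ‖ρ (f z)‖ ^ 2 ∂μ := by
  have hfi2 : Integrable (fun z => f z ^ 2) μ := by
    simpa only [sq] using! hfi.integrable_mul hfi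
  have hfsq : Integrable (fun z => (1 / 9) * ‖f z‖ ^ 2) μ :=
    (hfi.integrable_norm_pow two_ne_zero).const_mul _
  have hre : Integrable (fun z => (4 / 25) * (f z ^ 2).re) μ := hfi2.re.const_mul _
  have hmean : ∫ z, (f z ^ 2).re ∂μ = 0 :=
    hμ.integral_re_eq_zero (hf.pow 2) (by simp [hf0]) hfi2
  calc (1 / 9) * ∫ z, ‖f z‖ ^ 2 ∂μ
      = ∫ z, ((1 / 9) * ‖f z‖ ^ 2 + (4 / 25) * (f z ^ 2).re) ∂μ := by
        rw [integral_add hfsq hre, integral_const_mul, integral_const_mul, hmean, mul_zero,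
          add_zero]
    _ ≤ ∫ z, ‖ρ (f z)‖ ^ 2 ∂μ := by
        refine integral_mono_ae (hfsq.add hre)
          ((memLp_ρ_comp hfi).integrable_norm_pow two_ne_zero) ?_
        filter_upwards [hle] with z hz
        simpa only [Real.norm_eq_abs, sq_abs] using le_ρ_sq_of_norm_le hz

lemma fockNorm_sq_le_fockNorm_ρ_comp_sq (hf : Differentiable ℂ f) (hf0 : f 0 = 0)
    (hfi : MemLp f 2 fockMeasure) :
    fockNorm f ^ 2 ≤ 18 * fockNorm (fun z => ρ (f z)) ^ 2 := by
  let T : Set ℝ := {r | Real.exp (-r ^ 2) < 4 * fockNorm f ^ 2}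
  have hTm : MeasurableSet T := measurableSet_lt (by fun_prop) measurable_const
  have hSm : MeasurableSet (norm ⁻¹' T : Set ℂ) := measurable_norm hTm
  have htail : fockMeasure.real (norm ⁻¹' T) ≤ 4 * fockNorm f ^ 2 :=
    fockMeasure_real_exp_neg_norm_sq_lt_le (by positivity)
  have hrot := isRotationInvariant_fockMeasure.restrict_norm_preimage hTm
  have hrotc := isRotationInvariant_fockMeasure.restrict_norm_preimage hTm.compl
  have hsmall : ∀ z ∈ (norm ⁻¹' T : Set ℂ)ᶜ, ‖f z‖ ≤ 1 / 2 := fun z hz => by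
    have hexp : 4 * fockNorm f ^ 2 ≤ Real.exp (-‖z‖ ^ 2) := not_lt.1 hz
    have hpoint := norm_sq_mul_exp_le_fockNorm_sq hf hfi z
    have hsq : ‖f z‖ ^ 2 ≤ (1 / 2) ^ 2 := by nlinarith [Real.exp_pos (-‖z‖ ^ 2)]
    exact le_of_sq_le_sq hsq (by norm_num)
  have houter := hrot.integral_norm_sq_sub_le_integral_ρ_sq hf hf0 (hfi.restrict _)
  have hinner := hrotc.integral_norm_sq_le_integral_ρ_sq hf hf0 (hfi.restrict _)
    (ae_restrict_of_forall_mem hSm.compl hsmall)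
  rw [preimage_compl] at hinner
  rw [measureReal_restrict_apply_univ] at houter
  have hsplit := integral_add_compl hSm (hfi.integrable_norm_pow two_ne_zero)
  have hsplitρ := integral_add_compl hSm ((memLp_ρ_comp hfi).integrable_norm_pow two_ne_zero)
  rw [← fockNorm_sq] at hsplit hsplitρ
  linarith

end Coercivity

theorem stmt2_general {f : ℂ → ℂ} (hf : Differentiable ℂ f) (hf0 : f 0 = 0)
    (hfi : MemLp f 2 fockMeasure) :
    fockNorm f ≤ √18 * fockNorm (fun z => ρ (f z)) := by
  refine le_of_sq_le_sq ?_ (mul_nonneg (Real.sqrt_nonneg _) (Real.sqrt_nonneg _))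
  rw [mul_pow, Real.sq_sqrt (by norm_num)]
  exact fockNorm_sq_le_fockNorm_ρ_comp_sq hf hf0 hfi

/-- **Fock-space orthogonal coercivity.** With the absolute constant `C = 4600`:
for every `D ≥ 1` and every polynomial `U(z) = Σ_{n=1}^D a_n zⁿ` (so `U(0) = 0`),
we have `‖U‖_F ≤ C ‖ρ ∘ U‖_F`. -/
theorem stmt2 (D : ℕ) (hD : 1 ≤ D) (a : ℕ → ℂ) :
    fockNorm (fun z => ∑ n ∈ Finset.Icc 1 D, a n * z ^ n)
      ≤ 4600 * fockNorm (fun z => ρ (∑ n ∈ Finset.Icc 1 D, a n * z ^ n)) := by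
  have hzero : ∑ n ∈ Finset.Icc 1 D, a n * 0 ^ n = 0 :=
    Finset.sum_eq_zero fun n hn => by
      rw [zero_pow (Nat.one_le_iff_ne_zero.1 (Finset.mem_Icc.1 hn).1), mul_zero]
  refine (stmt2_general (by fun_prop) hzero <| memLp_finsetSum _ fun n _ =>
    (memLp_pow_fockMeasure n).const_mul (a n)).trans ?_
  gcongr
  · exact Real.sqrt_nonneg _
  · exact Real.sqrt_le_iff.2 (by norm_num)
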